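/- Fix a real q ∈ (0,1] and let b : ℕ → ℕ satisfy b(k) ≥ 1 for all k. For k ≥ 1 define S(k) = Σ_{j=0}^{k} C(k,j)·q^j·(1−q)^{k−j}·min(j, b(k)). Then S(k)/min(q·k, b(k)) → 1 as k → ∞. -/

import Mathlib

open Finset

/-
A nonnegative random variable `X` of mean `m` satisfies `min X c ≥ min m c * (1 - |X - m| / m)`,
and `E|X - m|` is at most the standard deviation `σ` of `X`. Since also `E[min X c] ≤ min m c`, this
gives `1 - σ / m ≤ E[min X c] / min m c ≤ 1`, uniformly in the cap `c > 0`. For a binomial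
distribution `σ / m ≤ 1 / √m`, which tends to `0` as soon as the mean tends to infinity.
-/

open Filter MeasureTheory ProbabilityTheory
open scoped Topology unitInterval

theorem min_mul_one_sub_abs_sub_div_le_min {x m c : ℝ} (hx : 0 ≤ x) (hm : 0 < m) (hc : 0 ≤ c) :
    min m c * (1 - |x - m| / m) ≤ min x c := by
  have h_nonneg : 0 ≤ min m c := le_min hm.le hc
  have h_ratio : 1 - |x - m| / m ≤ x / m := by
    rw [one_sub_div hm.ne']
    gcongr
    linarith [neg_abs_le (x - m)]
  refine le_min ?_ ?_
  · calc min m c * (1 - |x - m| / m) ≤ min m c * (x / m) := by gcongr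
      _ ≤ m * (x / m) := by gcongr; exact min_le_left m c
      _ = x := mul_div_cancel₀ x hm.ne'
  · calc min m c * (1 - |x - m| / m) ≤ min m c :=
          mul_le_of_le_one_right h_nonneg (sub_le_self 1 (by positivity))
      _ ≤ c := min_le_right m c

section RandomVariable

variable {Ω : Type*} [MeasurableSpace Ω] {P : Measure Ω} {X : Ω → ℝ}

theorem integrable_min_const [IsFiniteMeasure P] (hX : Integrable X P) (c : ℝ) :
    Integrable (fun ω ↦ min (X ω) c) P :=
  hX.inf (integrable_const c)

variable [IsProbabilityMeasure P]

theorem integral_min_const_le (hX : Integrable X P) (c : ℝ) :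
    ∫ ω, min (X ω) c ∂P ≤ min P[X] c := by
  refine le_min ?_ ?_
  · exact integral_mono (integrable_min_const hX c) hX fun ω ↦ min_le_left (X ω) c
  · simpa using integral_mono (integrable_min_const hX c) (integrable_const c)
      fun ω ↦ min_le_right (X ω) c

theorem integral_abs_sub_integral_le_sqrt_variance (hX : MemLp X 2 P) :
    ∫ ω, |X ω - P[X]| ∂P ≤ √Var[X; P] := by
  have h_dev : MemLp (fun ω ↦ |X ω - P[X]|) 2 P :=
    (hX.sub (memLp_const (∫ ω, X ω ∂P))).abs
  have h_sq_le : (∫ ω, |X ω - P[X]| ∂P) ^ 2 ≤ ∫ ω, (X ω - P[X]) ^ 2 ∂P := by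
    have h_var := variance_nonneg (fun ω ↦ |X ω - P[X]|) P
    rw [variance_eq_sub h_dev] at h_var
    simpa using h_var
  rw [variance_eq_integral hX.aemeasurable]
  exact Real.le_sqrt_of_sq_le h_sq_le

theorem min_mul_one_sub_sqrt_variance_div_le_integral_min (hX : MemLp X 2 P)
    (hX_nonneg : 0 ≤ᵐ[P] X) (hm : 0 < P[X]) {c : ℝ} (hc : 0 ≤ c) :
    min P[X] c * (1 - √Var[X; P] / P[X]) ≤ ∫ ω, min (X ω) c ∂P := by
  have hX_int : Integrable X P := hX.integrable one_le_two
  have h_dev : Integrable (fun ω ↦ |X ω - P[X]| / P[X]) P :=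
    (hX_int.sub (integrable_const P[X])).abs.div_const P[X]
  calc min P[X] c * (1 - √Var[X; P] / P[X])
      ≤ min P[X] c * (1 - (∫ ω, |X ω - P[X]| ∂P) / P[X]) := by
        have := le_min hm.le hc
        gcongr
        exact integral_abs_sub_integral_le_sqrt_variance hX
    _ = ∫ ω, min P[X] c * (1 - |X ω - P[X]| / P[X]) ∂P := by
        rw [integral_const_mul, integral_sub (integrable_const 1) h_dev, integral_div]
        simp
    _ ≤ ∫ ω, min (X ω) c ∂P :=
        integral_mono_ae (((integrable_const 1).sub h_dev).const_mul _)
          (integrable_min_const hX_int c)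
          (hX_nonneg.mono fun ω hω ↦ min_mul_one_sub_abs_sub_div_le_min hω hm hc)

end RandomVariable

theorem tendsto_integral_min_div_min {ι : Type*} {l : Filter ι} {Ω : ι → Type*}
    [∀ i, MeasurableSpace (Ω i)] {P : ∀ i, Measure (Ω i)} [∀ i, IsProbabilityMeasure (P i)]
    {X : ∀ i, Ω i → ℝ} {c : ι → ℝ} (hX : ∀ i, MemLp (X i) 2 (P i))
    (hX_nonneg : ∀ i, 0 ≤ᵐ[P i] X i) (hm : ∀ᶠ i in l, 0 < (P i)[X i])
    (hc : ∀ᶠ i in l, 0 < c i)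
    (h_lim : Tendsto (fun i ↦ √Var[X i; P i] / (P i)[X i]) l (𝓝 0)) :
    Tendsto (fun i ↦ (∫ ω, min (X i ω) (c i) ∂P i) / min (P i)[X i] (c i)) l (𝓝 1) := by
  have h_lower : Tendsto (fun i ↦ 1 - √Var[X i; P i] / (P i)[X i]) l (𝓝 1) := by
    simpa using h_lim.const_sub 1
  refine tendsto_of_tendsto_of_tendsto_of_le_of_le' h_lower tendsto_const_nhds ?_ ?_
  · filter_upwards [hm, hc] with i hmi hci
    rw [le_div_iff₀' (lt_min hmi hci)]
    exact min_mul_one_sub_sqrt_variance_div_le_integral_min (hX i) (hX_nonneg i) hmi hci.le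
  · filter_upwards [hm, hc] with i hmi hci
    rw [div_le_one (lt_min hmi hci)]
    exact integral_min_const_le ((hX i).integrable one_le_two) (c i)

section Binomial

theorem integral_binomial_eq_sum_range (n : ℕ) (p : I) (f : ℕ → ℝ) :
    ∫ j, f j ∂Bin(n, p) =
      ∑ j ∈ range (n + 1), (n.choose j : ℝ) * (p : ℝ) ^ j * (1 - p) ^ (n - j) * f j := by
  rw [integral_binomial, Nat.range_succ_eq_Iic]
  simp only [smul_eq_mul]

theorem integral_binomial_eq_sum_eval_bernsteinPolynomial (n : ℕ) (p : I) (f : ℕ → ℝ) :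
    ∫ j, f j ∂Bin(n, p) =
      ∑ j ∈ range (n + 1), (bernsteinPolynomial ℝ n j).eval (p : ℝ) * f j := by
  simp [integral_binomial_eq_sum_range, bernsteinPolynomial]

theorem integral_natCast_binomial (n : ℕ) (p : I) : ∫ j, (j : ℝ) ∂Bin(n, p) = p * n := by
  have h := congrArg (Polynomial.eval (p : ℝ)) (bernsteinPolynomial.sum_smul ℝ n)
  simpa [integral_binomial_eq_sum_eval_bernsteinPolynomial, Polynomial.eval_finsetSum,
    mul_comm] using h

theorem variance_natCast_binomial (n : ℕ) (p : I) :
    Var[fun j : ℕ ↦ (j : ℝ); Bin(n, p)] = p * n * (1 - p) := by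
  have h := congrArg (Polynomial.eval (p : ℝ)) (bernsteinPolynomial.variance ℝ n)
  rw [variance_eq_integral (by fun_prop), integral_natCast_binomial,
    integral_binomial_eq_sum_eval_bernsteinPolynomial]
  simpa [Polynomial.eval_finsetSum, mul_comm, sub_sq_comm] using h

theorem memLp_two_binomial (n : ℕ) (p : I) (f : ℕ → ℝ) : MemLp f 2 Bin(n, p) :=
  (memLp_two_iff_integrable_sq .of_discrete).2 (integrable_binomial _)

theorem sqrt_variance_div_integral_natCast_binomial_le (n : ℕ) (p : I) :
    √Var[fun j : ℕ ↦ (j : ℝ); Bin(n, p)] / ∫ j, (j : ℝ) ∂Bin(n, p) ≤ 1 / √(p * n) := by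
  have hp : (0 : ℝ) ≤ p := p.2.1
  have h_var_le_mean : (p * n * (1 - p) : ℝ) ≤ p * n :=
    mul_le_of_le_one_right (by positivity) (sub_le_self 1 hp)
  rw [variance_natCast_binomial, integral_natCast_binomial, ← Real.sqrt_div_self']
  exact div_le_div_of_nonneg_right (Real.sqrt_le_sqrt h_var_le_mean) (by positivity)

theorem tendsto_integral_min_binomial_div_min {ι : Type*} {l : Filter ι} {n : ι → ℕ} {p : ι → I}
    {c : ι → ℝ} (hm : Tendsto (fun i ↦ (p i : ℝ) * n i) l atTop) (hc : ∀ᶠ i in l, 0 < c i) :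
    Tendsto (fun i ↦ (∫ j, min (j : ℝ) (c i) ∂Bin(n i, p i)) / min (p i * n i : ℝ) (c i))
      l (𝓝 1) := by
  have h_inv_sqrt : Tendsto (fun i ↦ 1 / √((p i : ℝ) * n i)) l (𝓝 0) :=
    (Real.tendsto_sqrt_atTop.comp hm).const_div_atTop 1
  have h_lim : Tendsto (fun i ↦ √Var[fun j : ℕ ↦ (j : ℝ); Bin(n i, p i)] /
      ∫ j, (j : ℝ) ∂Bin(n i, p i)) l (𝓝 0) :=
    squeeze_zero (fun i ↦ div_nonneg (Real.sqrt_nonneg _) (integral_nonneg fun j ↦ j.cast_nonneg))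
      (fun i ↦ sqrt_variance_div_integral_natCast_binomial_le (n i) (p i)) h_inv_sqrt
  have h_pos : ∀ᶠ i in l, 0 < ∫ j, (j : ℝ) ∂Bin(n i, p i) := by
    simpa only [integral_natCast_binomial] using hm.eventually_gt_atTop 0
  simpa only [integral_natCast_binomial] using
    tendsto_integral_min_div_min (fun i ↦ memLp_two_binomial (n i) (p i) fun j ↦ (j : ℝ))
      (fun i ↦ ae_of_all _ fun j ↦ j.cast_nonneg) h_pos hc h_lim

end Binomial

theorem stmt11_general (q : ℕ → ℝ) (hq0 : ∀ k, 0 ≤ q k) (hq1 : ∀ k, q k ≤ 1)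
    (hq : Tendsto (fun k : ℕ ↦ q k * k) atTop atTop) (b : ℕ → ℝ) (hb : ∀ k, 0 < b k) :
    Tendsto (fun k : ℕ ↦
      (∑ j ∈ range (k + 1),
          (Nat.choose k j : ℝ) * q k ^ j * (1 - q k) ^ (k - j) * min (j : ℝ) (b k)) /
        min (q k * k) (b k))
      atTop (𝓝 1) := by
  lift q to ℕ → I using fun k ↦ ⟨hq0 k, hq1 k⟩
  simpa only [integral_binomial_eq_sum_range] using
    tendsto_integral_min_binomial_div_min hq (.of_forall hb)

/-- For fixed `q ∈ (0,1]` and `b : ℕ → ℕ` with `b k ≥ 1`, the quantity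
`S(k) = Σ_{j=0}^{k} C(k,j)·q^j·(1−q)^{k−j}·min(j, b k)` satisfies
`S(k)/min(q·k, b k) → 1` as `k → ∞`. -/
theorem stmt11 (q : ℝ) (hq0 : 0 < q) (hq1 : q ≤ 1) (b : ℕ → ℕ) (hb : ∀ k, 1 ≤ b k) :
    Filter.Tendsto (fun k : ℕ =>
      (∑ j ∈ Finset.range (k + 1),
          (Nat.choose k j : ℝ) * q ^ j * (1 - q) ^ (k - j) * min (j : ℝ) (b k : ℝ)) /
        min (q * k) (b k : ℝ))
      Filter.atTop (nhds 1) :=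
  stmt11_general (fun _ ↦ q) (fun _ ↦ hq0.le) (fun _ ↦ hq1)
    (tendsto_natCast_atTop_atTop.const_mul_atTop hq0) (fun k ↦ b k) fun k ↦ Nat.cast_pos.2 (hb k)
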